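/- arXiv:2212.03944 — 2 statements merged into one kernel-verified Lean document; each statement's English description precedes it below -/
import Mathlib

section
/- Suppose φ:𝒳^v→ℝ is measurable and the tail assumption (T) holds with some p ∈ [1,∞], and suppose limsup_{n→∞}‖W_{Q_n}‖_{qΔ} < ∞ for some q ∈ (1,∞] with 1/p + 1/q ≤ 1. For M > 0 set φ_M = φ·1{|φ| ≤ M}, and let U_{n,M}(X), V_{n,M}(X) be defined as U_n(X), V_n(X) with φ replaced by φ_M. Then for every δ > 0: limsup_{M→∞} limsup_{n→∞} (1/n) log P( |V_n(X) − V_{n,M}(X)| ≥ δ ) = −∞, and limsup_{M→∞} limsup_{n→∞} (1/n) log P( |U_n(X) − U_{n,M}(X)| ≥ δ ) = −∞. -/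
open MeasureTheory Filter Set
open scoped ENNReal NNReal

noncomputable section

/-- The uniform probability measure on `[0,1]`. -/
def unif01 : Measure ℝ := volume.restrict (Set.Icc 0 1)

instance : IsProbabilityMeasure unif01 :=
  ⟨by rw [unif01, Measure.restrict_apply_univ, Real.volume_Icc]; norm_num⟩

/-- The `L^r` norm (`r : ℝ≥0∞`) of a kernel, viewed as a function on `[0,1]²`. -/
def kerNorm (W : ℝ → ℝ → ℝ) (r : ℝ≥0∞) : ℝ≥0∞ :=
  eLpNorm (fun z : ℝ × ℝ => W z.1 z.2) r (unif01.prod unif01)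

/-- The (strong) cut distance `d_□` between two kernels on `[0,1]²`. -/
def cutDist (W₁ W₂ : ℝ → ℝ → ℝ) : ℝ :=
  ⨆ S : {S : Set ℝ // MeasurableSet S}, ⨆ T : {T : Set ℝ // MeasurableSet T},
    |∫ x in Set.Icc (0:ℝ) 1 ∩ S.1, ∫ y in Set.Icc (0:ℝ) 1 ∩ T.1, (W₁ x y - W₂ x y)|

/-- A Lebesgue-measure-preserving bijection of `[0,1]`. -/
def MPB (σ : ℝ → ℝ) : Prop :=
  Set.BijOn σ (Set.Icc 0 1) (Set.Icc 0 1) ∧ MeasurePreserving σ unif01 unif01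

/-- The weak cut distance `δ_□`. -/
def weakCutDist (W₁ W₂ : ℝ → ℝ → ℝ) : ℝ :=
  ⨅ σ : {σ : ℝ → ℝ // MPB σ}, cutDist (fun x y => W₁ (σ.1 x) (σ.1 y)) W₂

/-- The step kernel `W_{Q_n}` associated to an `n × n` matrix `Q`:
it equals `Q i j` when `⌈n x⌉ = i, ⌈n y⌉ = j`. -/
def stepKernel (n : ℕ) (Q : Fin n → Fin n → ℝ) : ℝ → ℝ → ℝ := fun x y =>
  ∑ i : Fin n, ∑ j : Fin n,
    if x ∈ Set.Ioc (((i : ℕ) : ℝ)/n) ((((i : ℕ) : ℝ)+1)/n) ∧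
       y ∈ Set.Ioc (((j : ℕ) : ℝ)/n) ((((j : ℕ) : ℝ)+1)/n)
    then Q i j else 0

/-- Product over the edges of `H` (each edge counted once) of `f a b`. -/
def edgeProd {v : ℕ} (G : SimpleGraph (Fin v)) [DecidableRel G.Adj]
    (f : Fin v → Fin v → ℝ) : ℝ :=
  ∏ p ∈ Finset.univ.filter (fun p : Fin v × Fin v => G.Adj p.1 p.2 ∧ p.1 < p.2), f p.1 p.2

/-- The number of edges `|E(H)|`. -/
def edgeCard {v : ℕ} (G : SimpleGraph (Fin v)) [DecidableRel G.Adj] : ℕ :=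
  (Finset.univ.filter (fun p : Fin v × Fin v => G.Adj p.1 p.2 ∧ p.1 < p.2)).card

/-- The inhomogeneous U-statistic `U_n(X)` (sum over distinct indices). -/
def Ustat {X : Type*} {v : ℕ} (G : SimpleGraph (Fin v)) [DecidableRel G.Adj]
    (φ : (Fin v → X) → ℝ) (n : ℕ) (Q : Fin n → Fin n → ℝ) (x : Fin n → X) : ℝ :=
  (∑ i ∈ Finset.univ.filter (fun i : Fin v → Fin n => Function.Injective i),
      φ (x ∘ i) * edgeProd G (fun a b => Q (i a) (i b))) / (n : ℝ) ^ v

/-- The inhomogeneous V-statistic `V_n(X)` (sum over all indices). -/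
def Vstat {X : Type*} {v : ℕ} (G : SimpleGraph (Fin v)) [DecidableRel G.Adj]
    (φ : (Fin v → X) → ℝ) (n : ℕ) (Q : Fin n → Fin n → ℝ) (x : Fin n → X) : ℝ :=
  (∑ i : Fin v → Fin n, φ (x ∘ i) * edgeProd G (fun a b => Q (i a) (i b))) / (n : ℝ) ^ v

open Classical in
/-- Kullback-Leibler divergence `D(ν | ρ) ∈ [0,∞]`. -/
def KLdiv {α : Type*} [MeasurableSpace α] (ν ρ : Measure α) : ℝ≥0∞ :=
  if ν ≪ ρ ∧ Integrable (llr ν ρ) ν then ENNReal.ofReal (∫ a, llr ν ρ a ∂ν) else ⊤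

open Classical in
/-- `ν` itself if it is a probability measure, junk value `0` otherwise. -/
def probOr {α : Type*} [MeasurableSpace α] (ν : Measure α) : Measure α :=
  if IsProbabilityMeasure ν then ν else 0

instance {α : Type*} [MeasurableSpace α] (ν : Measure α) : SigmaFinite (probOr ν) := by
  unfold probOr
  split_ifs with h
  · haveI := h; infer_instance
  · infer_instance

/-- `v`-fold product of a (probability) measure. -/
def piProb {α : Type*} [MeasurableSpace α] (v : ℕ) (ν : Measure α) : Measure (Fin v → α) :=
  Measure.pi fun _ => probOr ν

/-- The functional `T_{W,φ}(ν) = E[φ(B₁,…,B_v) ∏_{(a,b) ∈ E(H)} W(A_a,A_b)]`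
for `(A_a,B_a)` i.i.d. with law `ν`. -/
def TWphi {X : Type*} [MeasurableSpace X] {v : ℕ} (G : SimpleGraph (Fin v))
    [DecidableRel G.Adj] (W : ℝ → ℝ → ℝ) (φ : (Fin v → X) → ℝ)
    (ν : Measure (ℝ × X)) : ℝ :=
  ∫ z : Fin v → ℝ × X,
    φ (fun a => (z a).2) * edgeProd G (fun a b => W (z a).1 (z b).1) ∂(piProb v ν)

/-- Membership in `𝒯ℳ`: probability measures on `[0,1] × 𝒳` whose first marginal
is uniform on `[0,1]`. -/
def inTM {X : Type*} [MeasurableSpace X] (ν : Measure (ℝ × X)) : Prop :=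
  IsProbabilityMeasure ν ∧ ν.map Prod.fst = unif01

/-- The rate function `I₀(t) = inf { D(ν|ρ) : ν ∈ 𝒯ℳ, D(ν|ρ) < ∞, T_{W,φ}(ν) = t }`. -/
def rate0 {X : Type*} [MeasurableSpace X] {v : ℕ} (G : SimpleGraph (Fin v))
    [DecidableRel G.Adj] (W : ℝ → ℝ → ℝ) (φ : (Fin v → X) → ℝ) (μ : Measure X)
    (t : ℝ) : ℝ≥0∞ :=
  ⨅ ν : {ν : Measure (ℝ × X) //
      inTM ν ∧ KLdiv ν (unif01.prod μ) ≠ ⊤ ∧ TWphi G W φ ν = t},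
    KLdiv ν.1 (unif01.prod μ)

/-- Tail assumption (T): `E_μ[e^{λ ψ(X)^p}] < ∞` for all `λ > 0`; for `p = ∞`
it means `ψ` is bounded. -/
def TailCond {X : Type*} [MeasurableSpace X] (μ : Measure X) (ψ : X → ℝ)
    (p : ℝ≥0∞) : Prop :=
  if p = ⊤ then ∃ C : ℝ, ∀ x, ψ x ≤ C
  else ∀ lam : ℝ, 0 < lam →
    ∫⁻ x, ENNReal.ofReal (Real.exp (lam * ψ x ^ p.toReal)) ∂μ < ⊤

/-- A sequence of random elements `T n` defined on probability spaces `(Ω n, P n)`,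
taking values in a topological space `E`, satisfies a large deviation principle at
speed `n` with good rate function `I`. -/
def SatisfiesLDP {E : Type*} [TopologicalSpace E] {Ω : ℕ → Type*}
    [∀ n, MeasurableSpace (Ω n)] (P : ∀ n, Measure (Ω n)) (T : ∀ n, Ω n → E)
    (I : E → ℝ≥0∞) : Prop :=
  (∀ c : ℝ≥0∞, c ≠ ⊤ → IsCompact {x | I x ≤ c}) ∧
  ∀ F : Set E, MeasurableSet[borel E] F →
    (-(⨅ x ∈ interior F, (I x : EReal)) ≤
      Filter.atTop.liminf fun n : ℕ =>
        (((n : ℝ)⁻¹ : ℝ) : EReal) * ENNReal.log (P n {ω | T n ω ∈ F})) ∧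
    (Filter.atTop.limsup (fun n : ℕ =>
        (((n : ℝ)⁻¹ : ℝ) : EReal) * ENNReal.log (P n {ω | T n ω ∈ F})) ≤
      -(⨅ x ∈ closure F, (I x : EReal)))

end

theorem finner_aux {ι κ α : Type*} [DecidableEq ι] [MeasurableSpace α]
    (m : ι → Measure α) [∀ i, IsProbabilityMeasure (m i)]
    (E : Finset κ) (S : κ → Finset ι) (f : κ → (ι → α) → ℝ≥0∞)
    (hf : ∀ e, Measurable (f e))
    (hdep : ∀ e a, a ∉ S e → ∀ x y, f e (Function.update x a y) = f e x)
    (D : ℕ) (hD : 0 < D) (hdeg : ∀ a, (E.filter (fun e => a ∈ S e)).card ≤ D)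
    (s : Finset ι) :
    ∀ x, (∫⋯∫⁻_s, (fun x => ∏ e ∈ E, f e x ^ (1 / (D:ℝ))) ∂m) x
      ≤ ∏ e ∈ E, ((∫⋯∫⁻_s, f e ∂m) x) ^ (1 / (D:ℝ)) := by
  classical
  induction s using Finset.induction_on with
  | empty => intro x; simp
  | insert a s ha ih =>
    intro x
    have hm : Measurable (fun x => ∏ e ∈ E, f e x ^ (1 / (D:ℝ))) :=
      Finset.measurable_prod _ fun e _ => (hf e).pow_const _
    rw [lmarginal_insert _ hm ha]
    have hDR : (0:ℝ) < D := by exact_mod_cast hD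
    set g : κ → (ι → α) → ℝ≥0∞ := fun e => ∫⋯∫⁻_s, f e ∂m with hg
    have hgm : ∀ e, Measurable (g e) := fun e => (hf e).lmarginal m
    have hgi : ∀ e, (∫⋯∫⁻_insert a s, f e ∂m) x = ∫⁻ y, g e (Function.update x a y) ∂(m a) :=
      fun e => lmarginal_insert _ (hf e) ha x
    have hgc : ∀ e, a ∉ S e → ∀ y, g e (Function.update x a y) = g e x := by
      intro e hae y
      simp only [hg]
      rw [lmarginal_update_of_notMem (hf e) ha]
      have h0 : (f e ∘ fun x => Function.update x a y) = f e :=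
        funext fun z => hdep e a hae z y
      rw [h0]
    set c : ℝ≥0∞ := ∏ e ∈ E.filter (fun e => ¬ a ∈ S e), g e x ^ (1 / (D:ℝ)) with hc
    have hup : ∀ e, Measurable fun y => g e (Function.update x a y) :=
      fun e => (hgm e).comp (measurable_update x)
    calc _ ≤ ∫⁻ y, ∏ e ∈ E, g e (Function.update x a y) ^ (1 / (D:ℝ)) ∂(m a) :=
          lintegral_mono fun y => ih _
      _ = ∫⁻ y, c * ((fun _ => (1:ℝ≥0∞)) y ^ (1 - ∑ e ∈ E.filter (fun e => a ∈ S e), 1 / (D:ℝ)) *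
            ∏ e ∈ E.filter (fun e => a ∈ S e), g e (Function.update x a y) ^ (1 / (D:ℝ))) ∂(m a) := by
          refine lintegral_congr fun y => ?_
          rw [← Finset.prod_filter_mul_prod_filter_not E (fun e => a ∈ S e), mul_comm]
          simp only [ENNReal.one_rpow, one_mul]
          congr 1
          refine Finset.prod_congr rfl fun e he => ?_
          rw [hgc e (Finset.mem_filter.1 he).2]
      _ = c * ∫⁻ y, ((fun _ => (1:ℝ≥0∞)) y ^ (1 - ∑ e ∈ E.filter (fun e => a ∈ S e), 1 / (D:ℝ)) *
            ∏ e ∈ E.filter (fun e => a ∈ S e), g e (Function.update x a y) ^ (1 / (D:ℝ))) ∂(m a) := by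
          rw [lintegral_const_mul]
          simp only [ENNReal.one_rpow, one_mul]
          exact Finset.measurable_prod _ fun e _ => (hup e).pow_const _
      _ ≤ c * ((∫⁻ _, 1 ∂(m a)) ^ (1 - ∑ e ∈ E.filter (fun e => a ∈ S e), 1 / (D:ℝ)) *
            ∏ e ∈ E.filter (fun e => a ∈ S e), (∫⁻ y, g e (Function.update x a y) ∂(m a)) ^ (1 / (D:ℝ))) := by
          gcongr
          refine ENNReal.lintegral_mul_prod_norm_pow_le (E.filter (fun e => a ∈ S e))
            (g := fun _ => 1) (f := fun e y => g e (Function.update x a y)) (p := fun _ => 1 / (D:ℝ))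
            aemeasurable_const (fun e _ => (hup e).aemeasurable) _ (by ring) ?_ (fun _ _ => by positivity)
          rw [Finset.sum_const, nsmul_eq_mul, sub_nonneg, mul_one_div, div_le_one hDR]
          exact_mod_cast hdeg a
      _ = _ := by
          rw [← Finset.prod_filter_mul_prod_filter_not E (fun e => a ∈ S e), mul_comm]
          simp only [lintegral_one, measure_univ, ENNReal.one_rpow, one_mul, hgi]
          congr 1
          refine Finset.prod_congr rfl fun e he => ?_
          simp [hgc e (Finset.mem_filter.1 he).2]

theorem finner {ι κ α : Type*} [Fintype ι] [DecidableEq ι] [MeasurableSpace α]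
    (m : Measure α) [IsProbabilityMeasure m]
    (E : Finset κ) (S : κ → Finset ι) (f : κ → (ι → α) → ℝ≥0∞)
    (hf : ∀ e, Measurable (f e))
    (hdep : ∀ e a, a ∉ S e → ∀ x y, f e (Function.update x a y) = f e x)
    (D : ℕ) (hD : 0 < D) (hdeg : ∀ a, (E.filter (fun e => a ∈ S e)).card ≤ D) :
    ∫⁻ x, ∏ e ∈ E, f e x ^ (1 / (D:ℝ)) ∂(Measure.pi fun _ => m)
      ≤ ∏ e ∈ E, (∫⁻ x, f e x ∂(Measure.pi fun _ => m)) ^ (1 / (D:ℝ)) := by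
  obtain ⟨x0⟩ : Nonempty α := nonempty_of_isProbabilityMeasure m
  have := finner_aux (fun _ => m) E S f hf hdep D hD hdeg Finset.univ (fun _ => x0)
  simpa [lmarginal_univ] using this
theorem chernoff_pi {X : Type*} [MeasurableSpace X] (μ : Measure X) [IsProbabilityMeasure μ]
    (Y : X → ℝ) (hY : Measurable Y) (lam t : ℝ) (hlam : 0 < lam) (n : ℕ) (hn : 0 < n) :
    (Measure.pi fun _ : Fin n => μ) {x | t ≤ (∑ j, Y (x j)) / n} ≤
      (ENNReal.ofReal (Real.exp (-(lam * t))) *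
        ∫⁻ x, ENNReal.ofReal (Real.exp (lam * Y x)) ∂μ) ^ n := by
  have hn' : (0:ℝ) < n := by exact_mod_cast hn
  set f : X → ℝ≥0∞ := fun x => ENNReal.ofReal (Real.exp (lam * Y x)) with hf
  have hfm : Measurable f := by fun_prop
  have hind : ∫⁻ x : Fin n → X, ∏ j, f (x j) ∂(Measure.pi fun _ : Fin n => μ)
      = (∫⁻ x, f x ∂μ) ^ n := by
    have h1 := ProbabilityTheory.iIndepFun_pi (μ := fun _ : Fin n => μ) (X := fun _ => f)
      (fun _ => hfm.aemeasurable)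
    have h2 := ProbabilityTheory.lintegral_prod_eq_prod_lintegral_of_indepFun Finset.univ
      (fun (j : Fin n) (x : Fin n → X) => f (x j)) h1
      (fun j => hfm.comp (measurable_pi_apply j))
    rw [h2]
    have h3 : ∀ j : Fin n, ∫⁻ x : Fin n → X, f (x j) ∂(Measure.pi fun _ : Fin n => μ)
        = ∫⁻ x, f x ∂μ := fun j =>
      (measurePreserving_eval (fun _ : Fin n => μ) j).lintegral_comp hfm
    simp [h3]
  have hmark := mul_meas_ge_le_lintegral (μ := Measure.pi fun _ : Fin n => μ)
    (f := fun x : Fin n → X => ∏ j, f (x j))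
    (Finset.measurable_prod _ fun j _ => hfm.comp (measurable_pi_apply j))
    (ENNReal.ofReal (Real.exp (lam * t)) ^ n)
  have hsub : {x : Fin n → X | t ≤ (∑ j, Y (x j)) / n} ⊆
      {x | ENNReal.ofReal (Real.exp (lam * t)) ^ n ≤ ∏ j, f (x j)} := by
    intro x hx
    simp only [mem_ofPred_eq] at hx ⊢
    rw [le_div_iff₀ hn'] at hx
    simp only [hf]
    rw [← ENNReal.ofReal_prod_of_nonneg (fun _ _ => (Real.exp_pos _).le),
      ← ENNReal.ofReal_pow (Real.exp_pos _).le, ← Real.exp_sum, ← Real.exp_nat_mul,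
      ← Finset.mul_sum]
    apply ENNReal.ofReal_le_ofReal
    apply Real.exp_le_exp.2
    nlinarith
  have hcan : ENNReal.ofReal (Real.exp (-(lam * t))) * ENNReal.ofReal (Real.exp (lam * t)) = 1 := by
    rw [← ENNReal.ofReal_mul (Real.exp_pos _).le, ← Real.exp_add]; simp
  calc _ ≤ (Measure.pi fun _ : Fin n => μ)
        {x | ENNReal.ofReal (Real.exp (lam * t)) ^ n ≤ ∏ j, f (x j)} := measure_mono hsub
    _ = ENNReal.ofReal (Real.exp (-(lam * t))) ^ n * (ENNReal.ofReal (Real.exp (lam * t)) ^ n *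
         (Measure.pi fun _ : Fin n => μ)
        {x | ENNReal.ofReal (Real.exp (lam * t)) ^ n ≤ ∏ j, f (x j)}) := by
        rw [← mul_assoc, ← mul_pow, hcan, one_pow, one_mul]
    _ ≤ _ := by
        rw [mul_pow, ← hind]
        gcongr

theorem prob_bound {X : Type*} [MeasurableSpace X] (μ : Measure X) [IsProbabilityMeasure μ]
    (Y : X → ℝ) (hY : Measurable Y) (hY0 : ∀ x, 0 ≤ Y x)
    (hexp : ∀ lam : ℝ, 0 < lam → ∫⁻ x, ENNReal.ofReal (Real.exp (lam * Y x)) ∂μ < ⊤)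
    (k : ℕ) (c η R : ℝ) (hc : 0 < c) (hη : 0 < η) :
    ∃ T : ℝ, 1 ≤ T ∧ ∀ n : ℕ, 0 < n →
      (Measure.pi fun _ : Fin n => μ)
        {x | η ≤ c * ((∑ j, if T < Y (x j) then Y (x j) else 0) / n) *
          ((∑ j, Y (x j)) / n) ^ k} ≤ ENNReal.ofReal (Real.exp (-(n * R))) := by
  -- bound for B
  set I1 := (∫⁻ x, ENNReal.ofReal (Real.exp (1 * Y x)) ∂μ).toReal with hI1
  have hI1' : ∫⁻ x, ENNReal.ofReal (Real.exp (1 * Y x)) ∂μ = ENNReal.ofReal I1 :=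
    (ENNReal.ofReal_toReal (hexp 1 one_pos).ne).symm
  have hI10 : 0 ≤ I1 := ENNReal.toReal_nonneg
  set L : ℝ := R + 1 + I1 with hL
  obtain ⟨L, hLL, hL1⟩ : ∃ L : ℝ, R + 1 + I1 ≤ L ∧ 1 ≤ L := ⟨max L 1, le_max_left _ _, le_max_right _ _⟩
  set ε : ℝ := η / (c * L ^ k) with hε
  have hε0 : 0 < ε := by positivity
  set lam : ℝ := (|R| + 2) / ε with hlam
  have hlam0 : 0 < lam := by positivity
  set I2 := (∫⁻ x, ENNReal.ofReal (Real.exp ((2 * lam) * Y x)) ∂μ).toReal with hI2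
  have hI2' : ∫⁻ x, ENNReal.ofReal (Real.exp ((2 * lam) * Y x)) ∂μ = ENNReal.ofReal I2 :=
    (ENNReal.ofReal_toReal (hexp _ (by positivity)).ne).symm
  have hI20 : 0 ≤ I2 := ENNReal.toReal_nonneg
  obtain ⟨T, hT, hT1⟩ : ∃ T : ℝ, I2 / lam ≤ T ∧ 1 ≤ T :=
    ⟨max (I2 / lam) 1, le_max_left _ _, le_max_right _ _⟩
  refine ⟨T, hT1, fun n hn => ?_⟩
  have hn' : (0:ℝ) < n := by exact_mod_cast hn
  have hn1 : (1:ℝ) ≤ n := by exact_mod_cast hn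
  set Z : X → ℝ := fun x => if T < Y x then Y x else 0 with hZ
  have hZm : Measurable Z := Measurable.ite (measurableSet_lt measurable_const hY) hY measurable_const
  have hZ0 : ∀ x, 0 ≤ Z x := by intro x; simp only [hZ]; split_ifs <;> simp [hY0 x]
  have hIT : I2 * Real.exp (-(lam * T)) ≤ 1 := by
    rw [Real.exp_neg, ← div_eq_mul_inv, div_le_one (Real.exp_pos _)]
    rw [div_le_iff₀ hlam0] at hT
    nlinarith [Real.add_one_le_exp (lam * T)]
  have hZint : ∫⁻ x, ENNReal.ofReal (Real.exp (lam * Z x)) ∂μ ≤ ENNReal.ofReal (Real.exp 1) := by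
    calc _ ≤ ∫⁻ x, (1 + ENNReal.ofReal (Real.exp (-(lam * T))) *
            ENNReal.ofReal (Real.exp ((2 * lam) * Y x))) ∂μ := by
          refine lintegral_mono fun x => ?_
          rw [← ENNReal.ofReal_one, ← ENNReal.ofReal_mul (Real.exp_pos _).le, ← Real.exp_add,
            ← ENNReal.ofReal_add zero_le_one (Real.exp_pos _).le]
          apply ENNReal.ofReal_le_ofReal
          simp only [hZ]
          split_ifs with h
          · have : Real.exp (lam * Y x) ≤ Real.exp (-(lam * T) + 2 * lam * Y x) := by
              apply Real.exp_le_exp.2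
              nlinarith
            linarith
          · simp [Real.exp_nonneg]
      _ = 1 + ENNReal.ofReal (Real.exp (-(lam * T))) * ENNReal.ofReal I2 := by
          rw [lintegral_add_left measurable_const, lintegral_const_mul _ (by fun_prop), hI2']
          simp
      _ ≤ _ := by
          rw [← ENNReal.ofReal_one, ← ENNReal.ofReal_mul (Real.exp_pos _).le,
            ← ENNReal.ofReal_add zero_le_one (by positivity)]
          apply ENNReal.ofReal_le_ofReal
          nlinarith [Real.add_one_le_exp (1:ℝ)]
  have hsub : {x : Fin n → X | η ≤ c * ((∑ j, Z (x j)) / n) * ((∑ j, Y (x j)) / n) ^ k} ⊆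
      {x | L ≤ (∑ j, Y (x j)) / n} ∪ {x | ε ≤ (∑ j, Z (x j)) / n} := by
    intro x hx
    by_contra hcon
    simp only [mem_union, mem_ofPred_eq, not_or, not_le] at hcon hx
    obtain ⟨h1, h2⟩ := hcon
    have hB0 : 0 ≤ (∑ j, Y (x j)) / n := div_nonneg (Finset.sum_nonneg fun _ _ => hY0 _) hn'.le
    have hA0 : 0 ≤ (∑ j, Z (x j)) / n := div_nonneg (Finset.sum_nonneg fun _ _ => hZ0 _) hn'.le
    have h3 : ((∑ j, Y (x j)) / n) ^ k ≤ L ^ k := pow_le_pow_left₀ hB0 h1.le k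
    have h4 : c * ((∑ j, Z (x j)) / n) * ((∑ j, Y (x j)) / n) ^ k ≤
        c * ((∑ j, Z (x j)) / n) * L ^ k := by gcongr
    have h5 : c * ((∑ j, Z (x j)) / n) * L ^ k < c * ε * L ^ k := by gcongr
    have h6 : c * ε * L ^ k = η := by rw [hε]; field_simp
    linarith
  have e1 := chernoff_pi μ Y hY 1 L one_pos n hn
  have e2 := chernoff_pi μ Z hZm lam ε hlam0 n hn
  have e1' : (Measure.pi fun _ : Fin n => μ) {x | L ≤ (∑ j, Y (x j)) / n} ≤
      ENNReal.ofReal (Real.exp (-(n * (R + 1)))) := by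
    refine e1.trans ?_
    rw [hI1', ← ENNReal.ofReal_mul (Real.exp_pos _).le,
      ← ENNReal.ofReal_pow (by positivity)]
    apply ENNReal.ofReal_le_ofReal
    rw [← mul_neg (n:ℝ), Real.exp_nat_mul]
    gcongr
    calc _ ≤ Real.exp (-(1 * L)) * Real.exp I1 := by
          gcongr
          linarith [Real.add_one_le_exp I1]
      _ ≤ _ := by
        rw [← Real.exp_add]
        apply Real.exp_le_exp.2
        linarith
  have e2' : (Measure.pi fun _ : Fin n => μ) {x | ε ≤ (∑ j, Z (x j)) / n} ≤
      ENNReal.ofReal (Real.exp (-(n * (R + 1)))) := by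
    refine e2.trans ?_
    rw [← mul_neg (n:ℝ), Real.exp_nat_mul, ENNReal.ofReal_pow (by positivity)]
    gcongr
    calc _ ≤ ENNReal.ofReal (Real.exp (-(lam * ε))) * ENNReal.ofReal (Real.exp 1) := by
          gcongr
      _ ≤ _ := by
        rw [← ENNReal.ofReal_mul (Real.exp_pos _).le, ← Real.exp_add]
        apply ENNReal.ofReal_le_ofReal
        apply Real.exp_le_exp.2
        have : lam * ε = |R| + 2 := by rw [hlam]; field_simp
        linarith [le_abs_self R]
  refine (measure_mono hsub).trans ((measure_union_le _ _).trans ((add_le_add e1' e2').trans ?_))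
  rw [← ENNReal.ofReal_add (by positivity) (by positivity)]
  apply ENNReal.ofReal_le_ofReal
  have : Real.exp (-(n * R)) = Real.exp n * Real.exp (-(n * (R + 1))) := by
    rw [← Real.exp_add]; congr 1; ring
  rw [this]
  nlinarith [Real.add_one_le_exp (n:ℝ), Real.exp_pos (-(n * (R + 1)))]

theorem unif01_cell (n : ℕ) (hn : 0 < n) (i : Fin n) :
    unif01 (Set.Ioc (((i : ℕ) : ℝ)/n) ((((i : ℕ) : ℝ)+1)/n)) = (n : ℝ≥0∞)⁻¹ := by
  have hn' : (0:ℝ) < n := by exact_mod_cast hn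
  have hi : ((i : ℕ) : ℝ) + 1 ≤ n := by exact_mod_cast i.2
  rw [unif01, Measure.restrict_apply measurableSet_Ioc, inter_eq_left.2, Real.volume_Ioc]
  · rw [← sub_div, add_sub_cancel_left, one_div, ENNReal.ofReal_inv_of_pos hn',
      ENNReal.ofReal_natCast]
  · intro x hx
    refine ⟨le_trans (by positivity) hx.1.le, hx.2.trans ?_⟩
    rw [div_le_one hn']
    exact hi

theorem cell_unique (n : ℕ) (hn : 0 < n) (i j : Fin n) (x : ℝ)
    (hi : x ∈ Set.Ioc (((i : ℕ) : ℝ)/n) ((((i : ℕ) : ℝ)+1)/n))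
    (hj : x ∈ Set.Ioc (((j : ℕ) : ℝ)/n) ((((j : ℕ) : ℝ)+1)/n)) : i = j := by
  have hn' : (0:ℝ) < n := by exact_mod_cast hn
  have h1 := hi.1.trans_le hj.2
  have h2 := hj.1.trans_le hi.2
  rw [div_lt_div_iff_of_pos_right hn'] at h1 h2
  have h1' : (i:ℕ) < j + 1 := by exact_mod_cast h1
  have h2' : (j:ℕ) < i + 1 := by exact_mod_cast h2
  exact Fin.ext (by omega)

noncomputable def cellBox (n : ℕ) (e : Fin n × Fin n) : Set (ℝ × ℝ) :=
  Set.Ioc (((e.1 : ℕ) : ℝ)/n) ((((e.1 : ℕ) : ℝ)+1)/n) ×ˢ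
    Set.Ioc (((e.2 : ℕ) : ℝ)/n) ((((e.2 : ℕ) : ℝ)+1)/n)

theorem cellBox_meas (n : ℕ) (e : Fin n × Fin n) : MeasurableSet (cellBox n e) :=
  measurableSet_Ioc.prod measurableSet_Ioc

theorem cellBox_vol (n : ℕ) (hn : 0 < n) (e : Fin n × Fin n) :
    (unif01.prod unif01) (cellBox n e) = (n : ℝ≥0∞)⁻¹ * (n : ℝ≥0∞)⁻¹ := by
  rw [cellBox, Measure.prod_prod, unif01_cell n hn, unif01_cell n hn]

theorem stepKernel_cell (n : ℕ) (hn : 0 < n) (Q : Fin n → Fin n → ℝ) (e : Fin n × Fin n)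
    (z : ℝ × ℝ) (hz : z ∈ cellBox n e) : stepKernel n Q z.1 z.2 = Q e.1 e.2 := by
  obtain ⟨h1, h2⟩ := hz
  unfold stepKernel
  rw [Finset.sum_eq_single e.1, Finset.sum_eq_single e.2]
  · rw [if_pos ⟨h1, h2⟩]
  · intro j _ hj
    rw [if_neg]
    rintro ⟨_, h⟩
    exact hj (cell_unique n hn _ _ _ h h2)
  · simp
  · intro i _ hi
    refine Finset.sum_eq_zero fun j _ => ?_
    rw [if_neg]
    rintro ⟨h, _⟩
    exact hi (cell_unique n hn _ _ _ h h1)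
  · simp

theorem enorm_le_kerNorm_top (n : ℕ) (hn : 0 < n) (Q : Fin n → Fin n → ℝ) (i j : Fin n) :
    ‖Q i j‖ₑ ≤ kerNorm (stepKernel n Q) ⊤ := by
  have h1 : eLpNorm (fun z : ℝ × ℝ => stepKernel n Q z.1 z.2) ⊤
      ((unif01.prod unif01).restrict (cellBox n (i, j))) ≤ kerNorm (stepKernel n Q) ⊤ :=
    eLpNorm_mono_measure _ Measure.restrict_le_self
  refine le_trans (le_of_eq ?_) h1
  have h2 : (fun z : ℝ × ℝ => stepKernel n Q z.1 z.2)
      =ᵐ[(unif01.prod unif01).restrict (cellBox n (i, j))] fun _ => Q i j := by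
    filter_upwards [ae_restrict_mem (cellBox_meas n (i, j))] with z hz
    exact stepKernel_cell n hn Q (i, j) z hz
  rw [eLpNorm_congr_ae h2, eLpNorm_exponent_top, eLpNormEssSup_const]
  rw [Ne, Measure.restrict_eq_zero, cellBox_vol n hn]
  simp

theorem sum_le_kerNorm (n : ℕ) (hn : 0 < n) (Q : Fin n → Fin n → ℝ) (r : ℝ) (hr : 0 < r) :
    ∑ e : Fin n × Fin n, ‖Q e.1 e.2‖ₑ ^ r * ((n : ℝ≥0∞)⁻¹ * (n : ℝ≥0∞)⁻¹) ≤
      kerNorm (stepKernel n Q) (ENNReal.ofReal r) ^ r := by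
  rw [kerNorm, eLpNorm_eq_lintegral_rpow_enorm_toReal (by simpa using hr) ENNReal.ofReal_ne_top,
    ENNReal.toReal_ofReal hr.le, ← ENNReal.rpow_mul, one_div_mul_cancel hr.ne', ENNReal.rpow_one]
  have hdisj : ((Finset.univ : Finset (Fin n × Fin n)) : Set (Fin n × Fin n)).PairwiseDisjoint
      (cellBox n) := by
    intro e _ e' _ hne
    rw [Function.onFun, Set.disjoint_left]
    intro z hz hz'
    exact hne (Prod.ext (cell_unique n hn _ _ _ hz.1 hz'.1) (cell_unique n hn _ _ _ hz.2 hz'.2))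
  calc _ = ∑ e : Fin n × Fin n, ∫⁻ z in cellBox n e, ‖stepKernel n Q z.1 z.2‖ₑ ^ r
        ∂(unif01.prod unif01) := by
        refine Finset.sum_congr rfl fun e _ => ?_
        rw [setLIntegral_congr_fun (cellBox_meas n e)
          (g := fun _ => ‖Q e.1 e.2‖ₑ ^ r) (fun z hz => by
            simp only [stepKernel_cell n hn Q e z hz])]
        rw [setLIntegral_const, cellBox_vol n hn]
    _ = ∫⁻ z in ⋃ e ∈ (Finset.univ : Finset (Fin n × Fin n)), cellBox n e,
        ‖stepKernel n Q z.1 z.2‖ₑ ^ r ∂(unif01.prod unif01) :=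
        (lintegral_biUnion_finset hdisj (fun e _ => cellBox_meas n e) _).symm
    _ ≤ _ := setLIntegral_le_lintegral _ _

noncomputable def unifFin (n : ℕ) : Measure (Fin n) := (n : ℝ≥0∞)⁻¹ • Measure.count

theorem unifFin_prob (n : ℕ) (hn : 0 < n) : IsProbabilityMeasure (unifFin n) := by
  constructor
  rw [unifFin, Measure.smul_apply, Measure.count_apply MeasurableSet.univ]
  simp
  exact ENNReal.inv_mul_cancel (by exact_mod_cast hn.ne') (ENNReal.natCast_ne_top n)

theorem unifFin_singleton (n : ℕ) (i : Fin n) : unifFin n {i} = (n : ℝ≥0∞)⁻¹ := by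
  rw [unifFin, Measure.smul_apply, Measure.count_singleton]; simp

theorem edge_deg {v : ℕ} (G : SimpleGraph (Fin v)) [DecidableRel G.Adj] (a : Fin v) :
    ((Finset.univ.filter (fun p : Fin v × Fin v => G.Adj p.1 p.2 ∧ p.1 < p.2)).filter
      (fun e => a ∈ ({e.1, e.2} : Finset (Fin v)))).card ≤ G.maxDegree := by
  refine le_trans ?_ (G.degree_le_maxDegree a)
  rw [← SimpleGraph.card_neighborFinset_eq_degree]
  refine Finset.card_le_card_of_injOn (fun e => if e.1 = a then e.2 else e.1) ?_ ?_
  · rintro ⟨b, c⟩ h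
    simp only [Finset.coe_filter, Finset.mem_filter, Finset.mem_univ, true_and, mem_ofPred_eq,
      Finset.mem_insert, Finset.mem_singleton, SimpleGraph.coe_neighborFinset,
      SimpleGraph.mem_neighborSet] at h ⊢
    obtain ⟨⟨h1, h2⟩, rfl | rfl⟩ := h
    · simpa using h1
    · simpa [h2.ne] using h1.symm
  · rintro ⟨b, c⟩ h ⟨b', c'⟩ h' heq
    simp only [Finset.coe_filter, Finset.mem_filter, Finset.mem_univ, true_and, mem_ofPred_eq,
      Finset.mem_insert, Finset.mem_singleton] at h h' heq
    obtain ⟨⟨h1, h2⟩, h3⟩ := h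
    obtain ⟨⟨h1', h2'⟩, h3'⟩ := h'
    simp only [Prod.mk.injEq]
    grind

theorem edge_moment {v : ℕ} (G : SimpleGraph (Fin v)) [DecidableRel G.Adj]
    (q : ℝ) (hq : 0 < q) (hD : 0 < G.maxDegree) (C : ℝ≥0) :
    ∃ K : ℝ, 0 < K ∧ ∀ n : ℕ, 0 < n → ∀ Q : Fin n → Fin n → ℝ,
      kerNorm (stepKernel n Q) (ENNReal.ofReal (q * G.maxDegree)) ≤ C →
      ∑ i : Fin v → Fin n, |edgeProd G (fun a b => Q (i a) (i b))| ^ q ≤ K * (n:ℝ) ^ v := by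
  set D := G.maxDegree with hDdef
  set E := Finset.univ.filter (fun p : Fin v × Fin v => G.Adj p.1 p.2 ∧ p.1 < p.2) with hE
  have hDR : (0:ℝ) < D := by exact_mod_cast hD
  set K0 : ℝ≥0∞ := ∏ e ∈ E, ((C : ℝ≥0∞) ^ (q * D)) ^ (1 / (D:ℝ)) with hK0
  have hK0t : K0 ≠ ⊤ := by
    refine ENNReal.prod_ne_top fun e _ => ?_
    refine ENNReal.rpow_ne_top_of_nonneg (by positivity) ?_
    exact ENNReal.rpow_ne_top_of_nonneg (by positivity) ENNReal.coe_ne_top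
  refine ⟨K0.toReal + 1, by positivity, fun n hn Q hQ => ?_⟩
  have := unifFin_prob n hn
  have hn0 : (n : ℝ≥0∞) ≠ 0 := by exact_mod_cast hn.ne'
  have hnt : (n : ℝ≥0∞) ≠ ⊤ := ENNReal.natCast_ne_top n
  set f : Fin v × Fin v → (Fin v → Fin n) → ℝ≥0∞ :=
    fun e x => ‖Q (x e.1) (x e.2)‖ₑ ^ (q * D) with hf
  have hfin := finner (unifFin n) E (fun e => {e.1, e.2}) f (fun e => measurable_of_finite _)
    (by
      intro e a ha x y
      simp only [Finset.mem_insert, Finset.mem_singleton, not_or] at ha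
      simp only [hf]
      rw [Function.update_of_ne (Ne.symm ha.1), Function.update_of_ne (Ne.symm ha.2)])
    D hD (fun a => edge_deg G a)
  have hbd : ∀ e ∈ E, ∫⁻ x, f e x ∂(Measure.pi fun _ => unifFin n) ≤ (C : ℝ≥0∞) ^ (q * D) := by
    intro e he
    have hne : e.1 ≠ e.2 := (Finset.mem_filter.1 he).2.2.ne
    have hind := (ProbabilityTheory.iIndepFun_pi (μ := fun _ : Fin v => unifFin n)
      (X := fun _ => id) (fun _ => aemeasurable_id)).indepFun hne
    have hmap := (ProbabilityTheory.indepFun_iff_map_prod_eq_prod_map_map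
      (measurable_pi_apply _).aemeasurable (measurable_pi_apply _).aemeasurable).1 hind
    have hm1 : ∀ a : Fin v, Measure.map (fun x : Fin v → Fin n => x a)
        (Measure.pi fun _ => unifFin n) = unifFin n :=
      fun a => (measurePreserving_eval (fun _ : Fin v => unifFin n) a).map_eq
    rw [hm1, hm1] at hmap
    have : ∫⁻ x, f e x ∂(Measure.pi fun _ => unifFin n) =
        ∫⁻ z : Fin n × Fin n, ‖Q z.1 z.2‖ₑ ^ (q * D) ∂((unifFin n).prod (unifFin n)) := by
      rw [← hmap, lintegral_map (measurable_of_finite _) (measurable_of_finite _)]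
    rw [this, lintegral_fintype]
    calc _ = ∑ e : Fin n × Fin n, ‖Q e.1 e.2‖ₑ ^ (q * D) * ((n : ℝ≥0∞)⁻¹ * (n : ℝ≥0∞)⁻¹) := by
          refine Finset.sum_congr rfl fun z _ => ?_
          rw [← Set.singleton_prod_singleton, Measure.prod_prod, unifFin_singleton,
            unifFin_singleton]
      _ ≤ _ := sum_le_kerNorm n hn Q (q * D) (by positivity)
      _ ≤ _ := by gcongr
  have hle : ∫⁻ x, ∏ e ∈ E, f e x ^ (1 / (D:ℝ)) ∂(Measure.pi fun _ => unifFin n) ≤ K0 :=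
    hfin.trans (Finset.prod_le_prod' fun e he => ENNReal.rpow_le_rpow (hbd e he) (by positivity))
  have heq : ∀ x : Fin v → Fin n, ∏ e ∈ E, f e x ^ (1 / (D:ℝ)) =
      ENNReal.ofReal (|edgeProd G (fun a b => Q (x a) (x b))| ^ q) := by
    intro x
    rw [edgeProd, Finset.abs_prod, ← Real.finsetProd_rpow _ _ (fun _ _ => abs_nonneg _),
      ENNReal.ofReal_prod_of_nonneg (fun _ _ => by positivity)]
    refine Finset.prod_congr rfl fun e _ => ?_
    simp only [hf]
    rw [← ENNReal.rpow_mul, ← ENNReal.ofReal_rpow_of_nonneg (abs_nonneg _) hq.le,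
      Real.enorm_eq_ofReal_abs]
    congr 1
    field_simp
  have hpi : ∀ x : Fin v → Fin n, (Measure.pi fun _ : Fin v => unifFin n) {x} =
      ((n : ℝ≥0∞) ^ v)⁻¹ := by
    intro x
    rw [Measure.pi_singleton]
    simp [unifFin_singleton, ENNReal.inv_pow]
  rw [lintegral_fintype] at hle
  simp only [heq, hpi] at hle
  rw [← Finset.sum_mul, ← ENNReal.ofReal_sum_of_nonneg (fun _ _ => by positivity),
    ← div_eq_mul_inv, ENNReal.div_le_iff (by simp [hn0]) (by simp)] at hle
  have hfinal := ENNReal.toReal_mono (ENNReal.mul_ne_top hK0t (by simp)) hle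
  rw [ENNReal.toReal_ofReal (Finset.sum_nonneg fun _ _ => by positivity), ENNReal.toReal_mul,
    ENNReal.toReal_pow, ENNReal.toReal_natCast] at hfinal
  refine hfinal.trans ?_
  gcongr
  linarith

theorem tail_lower {X : Type*} [MeasurableSpace X] (μ : Measure X) [IsProbabilityMeasure μ]
    (ψ : X → ℝ) (hψ : Measurable ψ) (hψpos : ∀ x, 0 ≤ ψ x) (p : ℝ≥0∞) (hTail : TailCond μ ψ p)
    (s : ℝ) (hs : 1 ≤ s) (hsp : ENNReal.ofReal s ≤ p) (lam : ℝ) (hlam : 0 < lam) :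
    ∫⁻ x, ENNReal.ofReal (Real.exp (lam * ψ x ^ s)) ∂μ < ⊤ := by
  unfold TailCond at hTail
  split_ifs at hTail with h
  · obtain ⟨C, hC⟩ := hTail
    calc _ ≤ ∫⁻ _, ENNReal.ofReal (Real.exp (lam * C ^ s)) ∂μ := by
          refine lintegral_mono fun x => ?_
          apply ENNReal.ofReal_le_ofReal
          apply Real.exp_le_exp.2
          have := Real.rpow_le_rpow (hψpos x) (hC x) (by linarith : (0:ℝ) ≤ s)
          gcongr
      _ < ⊤ := by simp
  · have hsp' : s ≤ p.toReal := by
      rw [ENNReal.ofReal_le_iff_le_toReal h] at hsp; exact hsp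
    calc _ ≤ ∫⁻ x, ENNReal.ofReal (Real.exp lam) *
            ENNReal.ofReal (Real.exp (lam * ψ x ^ p.toReal)) ∂μ := by
          refine lintegral_mono fun x => ?_
          rw [← ENNReal.ofReal_mul (Real.exp_pos _).le, ← Real.exp_add]
          apply ENNReal.ofReal_le_ofReal
          apply Real.exp_le_exp.2
          have : ψ x ^ s ≤ 1 + ψ x ^ p.toReal := by
            have h0 : 0 ≤ ψ x ^ p.toReal := Real.rpow_nonneg (hψpos x) _
            rcases le_total (ψ x) 1 with h1 | h1
            · have := Real.rpow_le_one (hψpos x) h1 (by linarith : (0:ℝ) ≤ s)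
              linarith
            · have := Real.rpow_le_rpow_of_exponent_le h1 hsp'
              linarith
          nlinarith
      _ < ⊤ := by
          rw [lintegral_const_mul _ (by fun_prop)]
          exact ENNReal.mul_lt_top ENNReal.ofReal_lt_top (hTail lam hlam)

theorem holder_all {v : ℕ} (G : SimpleGraph (Fin v)) [DecidableRel G.Adj]
    (Q : ∀ n : ℕ, Fin n → Fin n → ℝ) (p : ℝ≥0∞) (hp : 1 ≤ p)
    (q : ℝ≥0∞) (hq : 1 < q) (hpq : p⁻¹ + q⁻¹ ≤ 1)
    (hnorm : Filter.atTop.limsup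
        (fun n => kerNorm (stepKernel n (Q n)) (q * (G.maxDegree : ℝ≥0∞))) ≠ ⊤) :
    ∃ s : ℝ, 1 ≤ s ∧ ENNReal.ofReal s ≤ p ∧ ∃ K : ℝ, 0 < K ∧ ∀ᶠ n : ℕ in atTop,
      ∀ g : (Fin v → Fin n) → ℝ, (∀ i, 0 ≤ g i) →
        ((∑ i, g i * |edgeProd G (fun a b => Q n (i a) (i b))|) / (n:ℝ) ^ v) ^ s ≤
          K * ((∑ i, g i ^ s) / (n:ℝ) ^ v) := by
  obtain ⟨C, hC⟩ : ∃ C : ℝ≥0, ∀ᶠ n : ℕ in atTop,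
      kerNorm (stepKernel n (Q n)) (q * (G.maxDegree : ℝ≥0∞)) ≤ C := by
    obtain ⟨C, hC⟩ := ENNReal.lt_iff_exists_nnreal_btwn.1 (lt_top_iff_ne_top.2 hnorm)
    exact ⟨C, (eventually_lt_of_limsup_lt hC.1).mono fun n h => h.le⟩
  -- uniformly bounded edge products: exponent 1 suffices
  have triv : ∀ K : ℝ, 0 < K → (∀ᶠ n : ℕ in atTop, ∀ i : Fin v → Fin n,
      |edgeProd G (fun a b => Q n (i a) (i b))| ≤ K) →
      ∃ s : ℝ, 1 ≤ s ∧ ENNReal.ofReal s ≤ p ∧ ∃ K : ℝ, 0 < K ∧ ∀ᶠ n : ℕ in atTop,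
      ∀ g : (Fin v → Fin n) → ℝ, (∀ i, 0 ≤ g i) →
        ((∑ i, g i * |edgeProd G (fun a b => Q n (i a) (i b))|) / (n:ℝ) ^ v) ^ s ≤
          K * ((∑ i, g i ^ s) / (n:ℝ) ^ v) := by
    intro K hK h
    refine ⟨1, le_rfl, by simpa using hp, K, hK, h.mono fun n hn g hg => ?_⟩
    simp only [Real.rpow_one]
    rw [← mul_div_assoc, Finset.mul_sum]
    refine div_le_div_of_nonneg_right (Finset.sum_le_sum fun i _ => ?_) (by positivity)
    rw [mul_comm]
    exact mul_le_mul_of_nonneg_right (hn i) (hg i)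
  rcases Nat.eq_zero_or_pos G.maxDegree with hD | hD
  · refine triv 1 one_pos (Eventually.of_forall fun n i => ?_)
    have hemp : Finset.univ.filter (fun p : Fin v × Fin v => G.Adj p.1 p.2 ∧ p.1 < p.2) = ∅ := by
      refine Finset.filter_eq_empty_iff.2 fun e _ he => ?_
      have h1 := G.degree_le_maxDegree e.1
      have h2 : 0 < G.degree e.1 := (G.degree_pos_iff_exists_adj e.1).2 ⟨e.2, he.1⟩
      omega
    rw [edgeProd, hemp]; simp
  rcases eq_or_ne q ⊤ with rfl | hqt
  · refine triv ((C:ℝ) ^ (Finset.univ.filter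
      (fun p : Fin v × Fin v => G.Adj p.1 p.2 ∧ p.1 < p.2)).card + 1) (by positivity) ?_
    filter_upwards [hC, eventually_gt_atTop 0] with n hn hn0 i
    rw [ENNReal.top_mul (by exact_mod_cast hD.ne')] at hn
    have hb : ∀ a b, |Q n a b| ≤ C := by
      intro a b
      have := (enorm_le_kerNorm_top n hn0 (Q n) a b).trans hn
      rw [enorm_eq_nnnorm] at this
      exact_mod_cast this
    rw [edgeProd, Finset.abs_prod]
    refine (Finset.prod_le_prod (fun _ _ => abs_nonneg _) (fun e _ => hb _ _)).trans ?_
    rw [Finset.prod_const]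
    linarith
  · set r := q.toReal with hr
    have hqr : q = ENNReal.ofReal r := (ENNReal.ofReal_toReal hqt).symm
    have hr1 : 1 < r := by
      rw [hqr] at hq
      simpa using hq
    have hconj := Real.HolderConjugate.conjExponent hr1
    set s := r.conjExponent with hs
    have hs1 : 1 < s := hconj.symm.lt
    obtain ⟨K, hK, hmom⟩ := edge_moment G r (by linarith) hD C
    refine ⟨s, hs1.le, ?_, K ^ (s - 1), by positivity, ?_⟩
    · rcases eq_or_ne p ⊤ with rfl | hpt
      · exact le_top
      rw [ENNReal.ofReal_le_iff_le_toReal hpt]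
      have hp1 : 1 ≤ p.toReal := by
        have := ENNReal.toReal_mono hpt hp
        simpa using this
      have h1 := ENNReal.toReal_mono ENNReal.one_ne_top hpq
      rw [ENNReal.toReal_add (by simp; exact (zero_lt_one.trans_le hp).ne')
        (by simp; exact (zero_lt_one.trans hq).ne'), ENNReal.toReal_inv, ENNReal.toReal_inv,
        ENNReal.toReal_one] at h1
      have h2 := hconj.inv_add_inv_eq_one
      have h3 : p.toReal⁻¹ ≤ s⁻¹ := by linarith
      exact (inv_le_inv₀ (by linarith) (by linarith)).1 h3
    · filter_upwards [hC, eventually_gt_atTop 0] with n hn hn0 g hg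
      have hn' : (0:ℝ) < n := by exact_mod_cast hn0
      have hmom' := hmom n hn0 (Q n) (by
        rw [ENNReal.ofReal_mul (by linarith), ENNReal.ofReal_natCast, ← hqr]
        exact hn)
      set N : ℝ := (n:ℝ) ^ v with hN
      have hN0 : 0 < N := by positivity
      set A := ∑ i, g i ^ s with hA
      have hA0 : 0 ≤ A := Finset.sum_nonneg fun i _ => Real.rpow_nonneg (hg i) _
      have hH := Real.inner_le_Lp_mul_Lq_of_nonneg Finset.univ hconj.symm (fun i _ => hg i)
        (fun i _ => abs_nonneg (edgeProd G (fun a b => Q n (i a) (i b))))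
      have hH2 : ∑ i, g i * |edgeProd G (fun a b => Q n (i a) (i b))| ≤
          A ^ (1 / s) * (K * N) ^ (1 / r) := by
        refine hH.trans ?_
        gcongr
      have hs0 : 0 < s := by linarith
      have hr0 : 0 < r := by linarith
      have hexp : 1 / r * s = s - 1 := by
        have h2 := hconj.inv_add_inv_eq_one
        have h3 : 1 / r = 1 - s⁻¹ := by rw [one_div]; linarith
        rw [h3]; field_simp
      have hS0 : 0 ≤ ∑ i, g i * |edgeProd G (fun a b => Q n (i a) (i b))| :=
        Finset.sum_nonneg fun i _ => mul_nonneg (hg i) (abs_nonneg _)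
      calc _ ≤ (A ^ (1 / s) * (K * N) ^ (1 / r) / N) ^ s := by gcongr
        _ = A * (K * N) ^ (s - 1) / N ^ s := by
          rw [Real.div_rpow (by positivity) hN0.le, Real.mul_rpow (by positivity) (by positivity),
            ← Real.rpow_mul hA0, ← Real.rpow_mul (by positivity), hexp,
            one_div_mul_cancel hs0.ne', Real.rpow_one]
        _ = _ := by
          rw [Real.mul_rpow hK.le hN0.le, Real.rpow_sub_one hN0.ne']
          have : N ^ s ≠ 0 := (Real.rpow_pos_of_pos hN0 s).ne'
          field_simp

theorem sum_factor (v n : ℕ) (Z Y : Fin n → ℝ) (a : Fin v) :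
    ∑ i : Fin v → Fin n, ∏ b, (if b = a then Z (i b) else Y (i b)) =
      (∑ j, Z j) * (∑ j, Y j) ^ (v - 1) := by
  have h := Finset.prod_univ_sum (fun _ : Fin v => (Finset.univ : Finset (Fin n)))
    (fun b j => if b = a then Z j else Y j)
  rw [Fintype.piFinset_univ] at h
  rw [← h, ← Finset.mul_prod_erase _ _ (Finset.mem_univ a)]
  congr 1
  · simp
  · rw [Finset.prod_congr rfl (g := fun _ => ∑ j, Y j)]
    · rw [Finset.prod_const, Finset.card_erase_of_mem (Finset.mem_univ a), Finset.card_univ,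
        Fintype.card_fin]
    · intro b hb
      simp [Finset.ne_of_mem_erase hb]

/-- The pointwise moment bound. -/
theorem moment_sum {X : Type*} {v : ℕ} (hv : 0 < v) (n : ℕ) (hn : 0 < n)
    (φ : (Fin v → X) → ℝ) (ψ : X → ℝ) (hψpos : ∀ x, 0 ≤ ψ x)
    (hdom : ∀ y : Fin v → X, |φ y| ≤ ∏ a, ψ (y a)) (s T M : ℝ) (hs : 1 ≤ s) (hT : 1 ≤ T)
    (hM : T ^ v ≤ M) (x : Fin n → X) :
    (∑ i : Fin v → Fin n, (if |φ (x ∘ i)| ≤ M then 0 else |φ (x ∘ i)|) ^ s) / (n:ℝ) ^ v ≤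
      v * ((∑ j, if T < ψ (x j) ^ s then ψ (x j) ^ s else 0) / n) *
        ((∑ j, ψ (x j) ^ s) / n) ^ (v - 1) := by
  have hn' : (0:ℝ) < n := by exact_mod_cast hn
  set Y : Fin n → ℝ := fun j => ψ (x j) ^ s with hY
  have hY0 : ∀ j, 0 ≤ Y j := fun j => Real.rpow_nonneg (hψpos _) _
  set Z : Fin n → ℝ := fun j => if T < Y j then Y j else 0 with hZ
  have hZ0 : ∀ j, 0 ≤ Z j := fun j => by simp only [hZ]; split_ifs <;> simp [hY0 j]
  have hterm : ∀ i : Fin v → Fin n, (if |φ (x ∘ i)| ≤ M then 0 else |φ (x ∘ i)|) ^ s ≤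
      ∑ a, ∏ b, (if b = a then Z (i b) else Y (i b)) := by
    intro i
    have hnn : ∀ a, 0 ≤ ∏ b, (if b = a then Z (i b) else Y (i b)) := fun a =>
      Finset.prod_nonneg fun b _ => by split_ifs <;> simp [hZ0, hY0]
    split_ifs with h
    · rw [Real.zero_rpow (by linarith)]
      exact Finset.sum_nonneg fun a _ => hnn a
    · push Not at h
      have hT1 : 1 ≤ T ^ v := one_le_pow₀ hT
      have h1 : |φ (x ∘ i)| ^ s ≤ ∏ b, Y (i b) := by
        simp only [hY]
        rw [Real.finsetProd_rpow _ _ (fun b _ => hψpos _)]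
        exact Real.rpow_le_rpow (abs_nonneg _) (hdom _) (by linarith)
      have h2 : |φ (x ∘ i)| ≤ |φ (x ∘ i)| ^ s := Real.self_le_rpow_of_one_le (by linarith) hs
      obtain ⟨a, ha⟩ : ∃ a, T < Y (i a) := by
        by_contra hcon
        push Not at hcon
        have : ∏ b, Y (i b) ≤ T ^ v := by
          refine (Finset.prod_le_prod (fun b _ => hY0 _) (fun b _ => hcon b)).trans ?_
          simp
        linarith
      refine h1.trans (le_trans (le_of_eq ?_) (Finset.single_le_sum (fun a _ => hnn a)
        (Finset.mem_univ a)))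
      refine Finset.prod_congr rfl fun b _ => ?_
      split_ifs with hb
      · subst hb; simp [hZ, ha]
      · rfl
  have hsum : ∑ i : Fin v → Fin n, (if |φ (x ∘ i)| ≤ M then 0 else |φ (x ∘ i)|) ^ s ≤
      v * ((∑ j, Z j) * (∑ j, Y j) ^ (v - 1)) := by
    refine (Finset.sum_le_sum fun i _ => hterm i).trans ?_
    rw [Finset.sum_comm]
    simp [sum_factor]
  calc _ ≤ v * ((∑ j, Z j) * (∑ j, Y j) ^ (v - 1)) / (n:ℝ) ^ v := by gcongr
    _ = _ := by
      obtain ⟨k, rfl⟩ : ∃ k, v = k + 1 := ⟨v - 1, by omega⟩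
      simp only [Nat.add_sub_cancel]
      rw [div_pow, pow_succ]
      field_simp

theorem limsup_bot (f : ℝ → ∀ n : ℕ, ℝ≥0∞)
    (h : ∀ R : ℝ, ∀ᶠ M : ℝ in atTop, ∀ᶠ n : ℕ in atTop, f M n ≤ ENNReal.ofReal (Real.exp (-(n * R)))) :
    Filter.atTop.limsup (fun M : ℝ => Filter.atTop.limsup fun n : ℕ =>
        (((n : ℝ)⁻¹ : ℝ) : EReal) * ENNReal.log (f M n)) = ⊥ := by
  rw [EReal.eq_bot_iff_forall_lt]
  intro y
  have hlt : ((y - 1 : ℝ) : EReal) < (y : EReal) := by exact_mod_cast sub_one_lt y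
  refine lt_of_le_of_lt ?_ hlt
  refine limsup_le_of_le (by isBoundedDefault) ?_
  filter_upwards [h (-(y - 1))] with M hM
  refine limsup_le_of_le (by isBoundedDefault) ?_
  filter_upwards [hM, eventually_gt_atTop 0] with n hn hn0
  have hn' : (0:ℝ) < n := by exact_mod_cast hn0
  calc _ ≤ (((n : ℝ)⁻¹ : ℝ) : EReal) *
        ENNReal.log (ENNReal.ofReal (Real.exp (-(n * -(y - 1))))) := by
        apply mul_le_mul_of_nonneg_left (ENNReal.log_le_log hn)
        exact_mod_cast (inv_pos.2 hn').le
    _ = _ := by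
        rw [ENNReal.log_ofReal_of_pos (Real.exp_pos _), Real.log_exp, ← EReal.coe_mul]
        congr 1
        field_simp

/-- Lemma 2.3 (i): exponential-equivalence of the truncated
U/V-statistics, where `φ_M = φ·1{|φ| ≤ M}`. -/
theorem truncation_exponential_equivalence
    {X : Type*} [MeasurableSpace X] [TopologicalSpace X] [PolishSpace X] [BorelSpace X]
    (μ : Measure X) [IsProbabilityMeasure μ]
    {v : ℕ} (hv : 2 ≤ v) (G : SimpleGraph (Fin v)) [DecidableRel G.Adj]
    (φ : (Fin v → X) → ℝ) (hφ : Measurable φ)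
    (Q : ∀ n : ℕ, Fin n → Fin n → ℝ)
    (hQsymm : ∀ n i j, Q n i j = Q n j i) (hQzero : ∀ n i, Q n i i = 0)
    (ψ : X → ℝ) (hψmeas : Measurable ψ) (hψpos : ∀ x, 0 ≤ ψ x)
    (p : ℝ≥0∞) (hp : 1 ≤ p) (hTail : TailCond μ ψ p)
    (hdom : ∀ y : Fin v → X, |φ y| ≤ ∏ a, ψ (y a))
    (q : ℝ≥0∞) (hq : 1 < q) (hpq : p⁻¹ + q⁻¹ ≤ 1)
    (hnorm : Filter.atTop.limsup
        (fun n => kerNorm (stepKernel n (Q n)) (q * (G.maxDegree : ℝ≥0∞))) ≠ ⊤)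
    (δ : ℝ) (hδ : 0 < δ) :
    (Filter.atTop.limsup (fun M : ℝ => Filter.atTop.limsup fun n : ℕ =>
        (((n : ℝ)⁻¹ : ℝ) : EReal) * ENNReal.log ((Measure.pi fun _ : Fin n => μ)
          {x | δ ≤ |Vstat G φ n (Q n) x -
            Vstat G (fun y => if |φ y| ≤ M then φ y else 0) n (Q n) x|})) = ⊥) ∧
    (Filter.atTop.limsup (fun M : ℝ => Filter.atTop.limsup fun n : ℕ =>
        (((n : ℝ)⁻¹ : ℝ) : EReal) * ENNReal.log ((Measure.pi fun _ : Fin n => μ)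
          {x | δ ≤ |Ustat G φ n (Q n) x -
            Ustat G (fun y => if |φ y| ≤ M then φ y else 0) n (Q n) x|})) = ⊥) := by
  classical
  obtain ⟨s, hs1, hsp, K, hK, hev⟩ := holder_all G Q p hp q hq hpq hnorm
  set Y : X → ℝ := fun x => ψ x ^ s with hY
  have hYm : Measurable Y := hψmeas.pow_const s
  have hY0 : ∀ x, 0 ≤ Y x := fun x => Real.rpow_nonneg (hψpos x) s
  have hYe := tail_lower μ ψ hψmeas hψpos p hTail s hs1 hsp
  have hv0 : (0:ℝ) < v := by
    have : 0 < v := by omega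
    exact_mod_cast this
  -- common bound for both statistics
  have key : ∀ D : ℝ → ∀ n : ℕ, (Fin n → X) → ℝ,
      (∀ M n x, |D M n x| ≤ (∑ i : Fin v → Fin n,
        (if |φ (x ∘ i)| ≤ M then 0 else |φ (x ∘ i)|) *
          |edgeProd G (fun a b => Q n (i a) (i b))|) / (n:ℝ) ^ v) →
      ∀ R : ℝ, ∀ᶠ M : ℝ in atTop, ∀ᶠ n : ℕ in atTop,
        (Measure.pi fun _ : Fin n => μ) {x | δ ≤ |D M n x|} ≤
          ENNReal.ofReal (Real.exp (-(n * R))) := by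
    intro D hDle R
    obtain ⟨T, hT1, hT⟩ := prob_bound μ Y hYm hY0 hYe (v - 1) (K * v) (δ ^ s) R (by positivity)
      (by positivity)
    filter_upwards [eventually_ge_atTop (T ^ v)] with M hM
    filter_upwards [hev, eventually_gt_atTop 0] with n hn hn0
    refine le_trans (measure_mono ?_) (hT n hn0)
    intro x hx
    simp only [mem_ofPred_eq] at hx ⊢
    have h1 := hn (fun i => if |φ (x ∘ i)| ≤ M then 0 else |φ (x ∘ i)|)
      (fun i => by split_ifs <;> simp)
    have h2 := moment_sum (by omega) n hn0 φ ψ hψpos hdom s T M hs1 hT1 hM x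
    have h3 : δ ^ s ≤ ((∑ i : Fin v → Fin n, (if |φ (x ∘ i)| ≤ M then 0 else |φ (x ∘ i)|) *
        |edgeProd G (fun a b => Q n (i a) (i b))|) / (n:ℝ) ^ v) ^ s :=
      Real.rpow_le_rpow hδ.le (hx.trans (hDle M n x)) (by linarith)
    calc δ ^ s ≤ _ := h3.trans h1
      _ ≤ _ := mul_le_mul_of_nonneg_left h2 hK.le
      _ = _ := by simp only [hY]; ring
  have hpt : ∀ (M : ℝ) (n : ℕ) (x : Fin n → X) (i : Fin v → Fin n),
      |φ (x ∘ i) * edgeProd G (fun a b => Q n (i a) (i b)) -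
        (if |φ (x ∘ i)| ≤ M then φ (x ∘ i) else 0) * edgeProd G (fun a b => Q n (i a) (i b))| =
      (if |φ (x ∘ i)| ≤ M then 0 else |φ (x ∘ i)|) *
          |edgeProd G (fun a b => Q n (i a) (i b))| := by
    intro M n x i
    rw [← sub_mul, abs_mul]
    congr 1
    split_ifs <;> simp
  refine ⟨limsup_bot _ (key _ ?_), limsup_bot _ (key _ ?_)⟩
  · intro M n x
    unfold Vstat
    rw [← sub_div, ← Finset.sum_sub_distrib, abs_div, abs_of_nonneg (by positivity : (0:ℝ) ≤ (n:ℝ) ^ v)]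
    gcongr
    refine (Finset.abs_sum_le_sum_abs _ _).trans (le_of_eq ?_)
    exact Finset.sum_congr rfl fun i _ => hpt M n x i
  · intro M n x
    unfold Ustat
    rw [← sub_div, ← Finset.sum_sub_distrib, abs_div, abs_of_nonneg (by positivity : (0:ℝ) ≤ (n:ℝ) ^ v)]
    gcongr
    refine (Finset.abs_sum_le_sum_abs _ _).trans ?_
    rw [Finset.sum_congr rfl fun i _ => hpt M n x i]
    refine Finset.sum_le_sum_of_subset_of_nonneg (Finset.filter_subset _ _) fun i _ _ => ?_
    split_ifs <;> positivity
end

section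
/- Let H be a finite simple graph with vertex set {1,…,v} (v ≥ 2), edge set E(H) and maximum degree Δ, let L > 0, and let φ:𝒳^v→[−L,L] be any function on a set 𝒳. Suppose {Qₙ} is a sequence of symmetric n×n real matrices with zero diagonal satisfying limsup_{n→∞} n^{−2}Σ_{i,j=1}^n |Qₙ(i,j)|^{qΔ} < ∞ for some q > 1. Then lim_{n→∞} n^{−v} · sup over (x₁,…,xₙ) ∈ 𝒳ⁿ of | Σ_{(i₁,…,i_v)∈S(n,v)} φ(x_{i₁},…,x_{i_v}) Π_{(a,b)∈E(H)} Qₙ(i_a,i_b) − Σ_{(i₁,…,i_v)∈[n]^v} φ(x_{i₁},…,x_{i_v}) Π_{(a,b)∈E(H)} Qₙ(i_a,i_b) | = 0. -/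
open MeasureTheory Filter Set
open scoped ENNReal NNReal

/-- A finite Finner-type inequality, in terms of `lmarginal`. -/
theorem finner_lmarginal {δ κ α : Type*} [Fintype δ] [DecidableEq δ] [DecidableEq κ] [Finite α]
    [MeasurableSpace α] [DiscreteMeasurableSpace α] (μ : Measure α) [IsProbabilityMeasure μ]
    (E : Finset κ) (inc : κ → δ → Prop) [∀ e a, Decidable (inc e a)]
    (f : κ → (δ → α) → ℝ≥0∞)
    (hdep : ∀ e a, ¬ inc e a → ∀ x y, f e (Function.update x a y) = f e x)
    (p : ℝ) (hp : 0 ≤ p) (hdeg : ∀ a, ((E.filter (fun e => inc e a)).card : ℝ) * p ≤ 1)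
    (s : Finset δ) :
    ∀ x, (∫⋯∫⁻_s, (fun x => ∏ e ∈ E, f e x ^ p) ∂(fun _ => μ)) x ≤
      ∏ e ∈ E, ((∫⋯∫⁻_s, f e ∂(fun _ => μ)) x) ^ p := by
  induction s using Finset.induction with
  | empty => intro x; simp
  | insert a s ha ih =>
    intro x
    rw [lmarginal_insert _ Measurable.of_discrete ha]
    have hins : ∀ e, (∫⋯∫⁻_insert a s, f e ∂(fun _ => μ)) x =
        ∫⁻ y, (∫⋯∫⁻_s, f e ∂(fun _ => μ)) (Function.update x a y) ∂μ := fun e =>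
      lmarginal_insert _ Measurable.of_discrete ha x
    simp_rw [hins]
    refine (lintegral_mono fun y => ih _).trans ?_
    have hconst : ∀ e, ¬ inc e a → ∀ y,
        (∫⋯∫⁻_s, f e ∂(fun _ => μ)) (Function.update x a y) = (∫⋯∫⁻_s, f e ∂(fun _ => μ)) x := by
      intro e he y
      rw [lmarginal_update_of_notMem Measurable.of_discrete ha]
      have hfe : f e ∘ (fun z => Function.update z a y) = f e := funext fun z => hdep e a he z y
      rw [hfe]
    simp_rw [← Finset.prod_filter_mul_prod_filter_not E (fun e => inc e a)]
    have h2 : ∀ y, ∏ e ∈ E with ¬ inc e a,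
        (∫⋯∫⁻_s, f e ∂(fun _ => μ)) (Function.update x a y) ^ p =
        ∏ e ∈ E with ¬ inc e a, (∫⋯∫⁻_s, f e ∂(fun _ => μ)) x ^ p := by
      intro y
      refine Finset.prod_congr rfl fun e he => ?_
      rw [hconst e (Finset.mem_filter.1 he).2]
    have h3 : ∏ e ∈ E with ¬ inc e a,
        (∫⁻ y, (∫⋯∫⁻_s, f e ∂(fun _ => μ)) (Function.update x a y) ∂μ) ^ p =
        ∏ e ∈ E with ¬ inc e a, (∫⋯∫⁻_s, f e ∂(fun _ => μ)) x ^ p := by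
      refine Finset.prod_congr rfl fun e he => ?_
      simp_rw [hconst e (Finset.mem_filter.1 he).2]
      simp
    simp_rw [h2]
    rw [h3, lintegral_mul_const _ Measurable.of_discrete]
    gcongr
    have key := ENNReal.lintegral_mul_prod_norm_pow_le (μ := μ) (E.filter (fun e => inc e a))
      (g := fun _ => 1)
      (f := fun e y => (∫⋯∫⁻_s, f e ∂(fun _ => μ)) (Function.update x a y))
      Measurable.of_discrete.aemeasurable (fun _ _ => Measurable.of_discrete.aemeasurable)
      (1 - ((E.filter (fun e => inc e a)).card : ℝ) * p) (p := fun _ => p)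
      (by simp) (by linarith [hdeg a]) (fun _ _ => hp)
    simpa using key

theorem lintegral_two_coords {δ α : Type*} [Fintype δ] [DecidableEq δ] [Finite α] [Nonempty α]
    [MeasurableSpace α] [DiscreteMeasurableSpace α] (μ : Measure α) [IsProbabilityMeasure μ]
    (a b : δ) (hab : a ≠ b) (F : α → α → ℝ≥0∞) :
    ∫⁻ x : δ → α, F (x a) (x b) ∂(Measure.pi fun _ => μ) = ∫⁻ y, ∫⁻ z, F y z ∂μ ∂μ := by
  have h1 : ∀ t : Finset δ, Disjoint t {a, b} → ∀ x : δ → α,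
      (∫⋯∫⁻_t, (fun x : δ → α => F (x a) (x b)) ∂(fun _ => μ)) x = F (x a) (x b) := by
    intro t
    induction t using Finset.induction with
    | empty => intro _ x; simp
    | insert c t hc ih =>
      intro hd x
      rw [Finset.disjoint_insert_left] at hd
      simp only [Finset.mem_insert, Finset.mem_singleton, not_or] at hd
      rw [lmarginal_insert _ Measurable.of_discrete hc]
      simp_rw [ih hd.2, Function.update_of_ne (Ne.symm hd.1.1), Function.update_of_ne (Ne.symm hd.1.2)]
      simp
  obtain ⟨z⟩ := (inferInstance : Nonempty (δ → α))
  rw [lintegral_eq_lmarginal_univ z,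
    ← Finset.union_sdiff_of_subset (Finset.subset_univ ({a, b} : Finset δ)),
    lmarginal_union _ _ Measurable.of_discrete Finset.disjoint_sdiff]
  have h2 := funext (h1 (Finset.univ \ {a, b}) Finset.sdiff_disjoint)
  rw [h2, lmarginal_insert _ Measurable.of_discrete (by simpa using hab)]
  simp [lmarginal_singleton, hab]

/-- uniform measure on `Fin n` -/
noncomputable def uFin (n : ℕ) : Measure (Fin n) := (n : ℝ≥0∞)⁻¹ • Measure.count

instance uFin_prob (n : ℕ) [NeZero n] : IsProbabilityMeasure (uFin n) := by
  constructor
  simp only [uFin, Measure.smul_apply, smul_eq_mul, Measure.count_univ]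
  simp
  exact ENNReal.inv_mul_cancel (by simpa using NeZero.ne n) (by simp)

theorem lintegral_uFin (n : ℕ) (f : Fin n → ℝ≥0∞) :
    ∫⁻ x, f x ∂(uFin n) = (∑ i, f i) / n := by
  rw [uFin, lintegral_smul_measure, lintegral_count, tsum_fintype, smul_eq_mul, mul_comm,
    div_eq_mul_inv]

theorem lintegral_pi_uFin (n v : ℕ) [NeZero n] (f : (Fin v → Fin n) → ℝ≥0∞) :
    ∫⁻ x, f x ∂(Measure.pi fun _ : Fin v => uFin n) = (∑ i, f i) / (n : ℝ≥0∞) ^ v := by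
  rw [lintegral_fintype, div_eq_mul_inv, Finset.sum_mul]
  refine Finset.sum_congr rfl fun i _ => ?_
  rw [Measure.pi_singleton]
  simp [uFin, ENNReal.inv_pow]

/-- The main estimate. -/
theorem noninj_bound {v : ℕ} (G : SimpleGraph (Fin v)) [DecidableRel G.Adj]
    (q : ℝ) (hq : 1 < q) (n : ℕ) [NeZero n] (Q : Fin n → Fin n → ℝ) :
    (∑ i ∈ Finset.univ.filter (fun i : Fin v → Fin n => ¬ Function.Injective i),
      ENNReal.ofReal |edgeProd G (fun a b => Q (i a) (i b))|) / (n : ℝ≥0∞) ^ v ≤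
    (((v : ℝ≥0∞) ^ 2) * (n : ℝ≥0∞)⁻¹) ^ (1 - q⁻¹) *
      ((((∑ i : Fin n, ∑ j : Fin n,
          ENNReal.ofReal (|Q i j| ^ (q * (G.maxDegree : ℝ)))) / ((n : ℝ≥0∞) ^ 2)) ^
            ((G.maxDegree : ℝ)⁻¹)) ^ (edgeCard G)) ^ q⁻¹ := by
  classical
  set M := (∑ i : Fin n, ∑ j : Fin n,
          ENNReal.ofReal (|Q i j| ^ (q * (G.maxDegree : ℝ)))) / ((n : ℝ≥0∞) ^ 2) with hM
  set π : Measure (Fin v → Fin n) := Measure.pi fun _ : Fin v => uFin n with hπ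
  set E := Finset.univ.filter (fun p : Fin v × Fin v => G.Adj p.1 p.2 ∧ p.1 < p.2) with hE
  have hq0 : 0 < q := by linarith
  have hne : (n : ℝ≥0∞) ≠ 0 := by simpa using NeZero.ne n
  have hnt : (n : ℝ≥0∞) ≠ ⊤ := by simp
  -- two-point integral
  have htwo : ∀ a b : Fin v, a ≠ b → ∀ F : Fin n → Fin n → ℝ≥0∞,
      ∫⁻ x, F (x a) (x b) ∂π = (∑ i, ∑ j, F i j) / (n : ℝ≥0∞) ^ 2 := by
    intro a b hab F
    rw [hπ, lintegral_two_coords (uFin n) a b hab F, lintegral_uFin]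
    simp_rw [lintegral_uFin, div_eq_mul_inv, ← Finset.sum_mul]
    rw [mul_assoc, sq,
      ENNReal.mul_inv (Or.inl hne) (Or.inl hnt)]
  -- Finner
  have hdeg : ∀ a, ((E.filter (fun e => e.1 = a ∨ e.2 = a)).card : ℝ) *
      (G.maxDegree : ℝ)⁻¹ ≤ 1 := by
    intro a
    have h1 : (E.filter (fun e => e.1 = a ∨ e.2 = a)).card ≤ G.maxDegree := by
      refine le_trans ?_ (G.degree_le_maxDegree a)
      rw [← SimpleGraph.card_neighborFinset_eq_degree]
      refine Finset.card_le_card_of_injOn (fun e => if e.1 = a then e.2 else e.1) ?_ ?_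
      · rintro ⟨b, c⟩ h
        simp only [hE, Finset.coe_filter, Finset.mem_filter, Finset.mem_univ, true_and,
          Set.mem_ofPred_eq] at h
        obtain ⟨⟨h1, h2⟩, h3⟩ := h
        simp only [Finset.mem_coe, SimpleGraph.mem_neighborFinset]
        by_cases hb : b = a
        · subst hb; simpa using h1
        · have : c = a := by tauto
          subst this
          simpa [hb] using h1.symm
      · rintro ⟨b, c⟩ h ⟨b', c'⟩ h' heq
        simp only [hE, Finset.coe_filter, Finset.mem_filter, Finset.mem_univ, true_and,
          Set.mem_ofPred_eq] at h h'
        simp only at heq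
        ext <;> grind
    have h2 : ((E.filter (fun e => e.1 = a ∨ e.2 = a)).card : ℝ) ≤ G.maxDegree := by
      exact_mod_cast h1
    rw [← div_eq_mul_inv]
    exact div_le_one_of_le₀ h2 (by positivity)
  have hprodE : ∀ x : Fin v → Fin n,
      ∏ e ∈ E, (ENNReal.ofReal (|Q (x e.1) (x e.2)| ^ (q * (G.maxDegree : ℝ)))) ^
        ((G.maxDegree : ℝ)⁻¹) =
      (ENNReal.ofReal |edgeProd G (fun a b => Q (x a) (x b))|) ^ q := by
    intro x
    rw [edgeProd, Finset.abs_prod, ENNReal.ofReal_prod_of_nonneg (fun _ _ => abs_nonneg _),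
      ← ENNReal.prod_rpow_of_nonneg hq0.le]
    refine Finset.prod_congr rfl fun e he => ?_
    have hpos : 0 < G.maxDegree := by
      have h1 : G.Adj e.1 e.2 := (Finset.mem_filter.1 he).2.1
      have h2 : 0 < G.degree e.1 := (G.degree_pos_iff_exists_adj e.1).2 ⟨_, h1⟩
      exact h2.trans_le (G.degree_le_maxDegree _)
    have hpos' : (G.maxDegree : ℝ) ≠ 0 := by positivity
    rw [← ENNReal.ofReal_rpow_of_nonneg (abs_nonneg _) (by positivity), ← ENNReal.rpow_mul]
    congr 1
    field_simp
  have hF : ∫⁻ x, (ENNReal.ofReal |edgeProd G (fun a b => Q (x a) (x b))|) ^ q ∂π ≤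
      (M ^ ((G.maxDegree : ℝ)⁻¹)) ^ (edgeCard G) := by
    have h0 := finner_lmarginal (uFin n) E (fun e a => e.1 = a ∨ e.2 = a)
      (fun e x => ENNReal.ofReal (|Q (x e.1) (x e.2)| ^ (q * (G.maxDegree : ℝ))))
      (by
        intro e a h x y
        push Not at h
        simp only [Function.update_of_ne h.1, Function.update_of_ne h.2])
      ((G.maxDegree : ℝ)⁻¹) (by positivity) hdeg Finset.univ (fun _ => ⟨0, NeZero.pos n⟩)
    simp only [lmarginal_univ, hprodE] at h0
    refine h0.trans (le_of_eq ?_)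
    rw [edgeCard, ← hE]
    rw [Finset.prod_congr rfl (g := fun _ => M ^ ((G.maxDegree : ℝ)⁻¹)), Finset.prod_const]
    intro e he
    have hne : e.1 ≠ e.2 := (Finset.mem_filter.1 he).2.1.ne
    rw [htwo e.1 e.2 hne (fun y z => ENNReal.ofReal (|Q y z| ^ (q * (G.maxDegree : ℝ))))]
  -- Probability of a collision
  have hN : ∫⁻ x, (if Function.Injective x then 0 else 1) ∂π ≤ (v : ℝ≥0∞) ^ 2 * (n : ℝ≥0∞)⁻¹ := by
    calc ∫⁻ x, (if Function.Injective x then 0 else 1) ∂π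
        ≤ ∫⁻ x, ∑ e : Fin v × Fin v, (if e.1 ≠ e.2 ∧ x e.1 = x e.2 then 1 else 0) ∂π := by
          refine lintegral_mono fun x => ?_
          dsimp only
          split_ifs with h
          · exact zero_le
          · rw [Function.Injective] at h
            push Not at h
            obtain ⟨a, b, h1, h2⟩ := h
            refine le_trans ?_ (Finset.single_le_sum (fun _ _ => zero_le)
              (Finset.mem_univ ((a, b) : Fin v × Fin v)))
            simp [h1, h2]
      _ = ∑ e : Fin v × Fin v, ∫⁻ x, (if e.1 ≠ e.2 ∧ x e.1 = x e.2 then 1 else 0) ∂π :=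
          lintegral_finsetSum _ fun _ _ => Measurable.of_discrete
      _ ≤ ∑ e : Fin v × Fin v, (n : ℝ≥0∞)⁻¹ := by
          refine Finset.sum_le_sum fun e _ => ?_
          by_cases he : e.1 = e.2
          · simp [he]
          · simp only [ne_eq, he, not_false_eq_true, true_and]
            rw [htwo e.1 e.2 he (fun y z => if y = z then 1 else 0)]
            simp only [Finset.sum_ite_eq, Finset.mem_univ, if_true, Finset.sum_const,
              Finset.card_univ, Fintype.card_fin, nsmul_eq_mul, mul_one]
            rw [sq, div_eq_mul_inv, ENNReal.mul_inv (Or.inl hne) (Or.inl hnt), ← mul_assoc,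
              ENNReal.mul_inv_cancel hne hnt, one_mul]
      _ = (v : ℝ≥0∞) ^ 2 * (n : ℝ≥0∞)⁻¹ := by
          simp [sq]
  have hq1 : q⁻¹ ≤ 1 := inv_le_one_of_one_le₀ hq.le
  have hq2 : 0 < 1 - q⁻¹ := by
    have := inv_lt_one_of_one_lt₀ hq
    linarith
  have hH := ENNReal.lintegral_mul_norm_pow_le (μ := π)
    (f := fun x => (if Function.Injective x then 0 else 1))
    (g := fun x => (ENNReal.ofReal |edgeProd G (fun a b => Q (x a) (x b))|) ^ q)
    Measurable.of_discrete.aemeasurable Measurable.of_discrete.aemeasurable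
    (p := 1 - q⁻¹) (q := q⁻¹) hq2.le (by positivity) (by ring)
  refine le_trans (le_of_eq ?_) (hH.trans ?_)
  · rw [hπ, lintegral_pi_uFin, Finset.sum_filter]
    congr 1
    refine Finset.sum_congr rfl fun i _ => ?_
    rw [← ENNReal.rpow_mul, mul_inv_cancel₀ hq0.ne', ENNReal.rpow_one]
    by_cases h : Function.Injective i
    · simp [h, hq2]
    · simp [h]
  · gcongr

/-- Lemma 2.7: uniform closeness of the U- and V-sums. -/
theorem U_V_sums_uniformly_close
    {X : Type*} [Nonempty X]
    {v : ℕ} (hv : 2 ≤ v) (G : SimpleGraph (Fin v)) [DecidableRel G.Adj]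
    (L : ℝ) (hL : 0 < L) (φ : (Fin v → X) → ℝ) (hφ : ∀ y, |φ y| ≤ L)
    (Q : ∀ n : ℕ, Fin n → Fin n → ℝ)
    (hQsymm : ∀ n i j, Q n i j = Q n j i) (hQzero : ∀ n i, Q n i i = 0)
    (q : ℝ) (hq : 1 < q)
    (hnorm : Filter.atTop.limsup (fun n : ℕ =>
        (∑ i : Fin n, ∑ j : Fin n,
          ENNReal.ofReal (|Q n i j| ^ (q * (G.maxDegree : ℝ)))) / ((n : ℝ≥0∞) ^ 2)) ≠ ⊤) :
    Tendsto (fun n : ℕ =>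
        (⨆ x : Fin n → X,
          |(∑ i ∈ Finset.univ.filter (fun i : Fin v → Fin n => Function.Injective i),
              φ (x ∘ i) * edgeProd G (fun a b => Q n (i a) (i b))) -
            ∑ i : Fin v → Fin n, φ (x ∘ i) * edgeProd G (fun a b => Q n (i a) (i b))|) /
          (n : ℝ) ^ v)
      atTop (nhds 0) := by
  have hNE : ∀ n : ℕ, Nonempty (Fin n → X) := fun n => inferInstance
  set M : ℕ → ℝ≥0∞ := fun n : ℕ =>
        (∑ i : Fin n, ∑ j : Fin n,
          ENNReal.ofReal (|Q n i j| ^ (q * (G.maxDegree : ℝ)))) / ((n : ℝ≥0∞) ^ 2) with hM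
  set B : ℕ → ℝ≥0∞ := fun n =>
    (∑ i ∈ Finset.univ.filter (fun i : Fin v → Fin n => ¬ Function.Injective i),
      ENNReal.ofReal |edgeProd G (fun a b => Q n (i a) (i b))|) / (n : ℝ≥0∞) ^ v with hB
  have hq0 : 0 < q := by linarith
  have hq2 : 0 < 1 - q⁻¹ := by
    have := inv_lt_one_of_one_lt₀ hq
    linarith
  obtain ⟨C, hC1, hC2⟩ := exists_between (lt_top_iff_ne_top.2 hnorm)
  have hMC : ∀ᶠ n in atTop, M n < C := Filter.eventually_lt_of_limsup_lt hC1
  have hBle : ∀ᶠ n in atTop, B n ≤ (((v : ℝ≥0∞) ^ 2) * (n : ℝ≥0∞)⁻¹) ^ (1 - q⁻¹) *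
      ((C ^ ((G.maxDegree : ℝ)⁻¹)) ^ (edgeCard G)) ^ q⁻¹ := by
    filter_upwards [hMC, eventually_gt_atTop 0] with n hn hn0
    haveI : NeZero n := ⟨hn0.ne'⟩
    refine (noninj_bound G q hq n (Q n)).trans ?_
    have : M n ≤ C := hn.le
    gcongr
  have hBlim : Tendsto B atTop (nhds 0) := by
    have hK : ((C ^ ((G.maxDegree : ℝ)⁻¹)) ^ (edgeCard G)) ^ q⁻¹ ≠ ⊤ := by
      refine ENNReal.rpow_ne_top_of_nonneg (by positivity) (ENNReal.pow_ne_top ?_)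
      exact ENNReal.rpow_ne_top_of_nonneg (by positivity) hC2.ne
    have h1 : Tendsto (fun n : ℕ => ((v : ℝ≥0∞) ^ 2) * (n : ℝ≥0∞)⁻¹) atTop (nhds 0) := by
      have := ENNReal.Tendsto.const_mul (a := (v : ℝ≥0∞) ^ 2)
        ENNReal.tendsto_inv_nat_nhds_zero (Or.inr (by simp))
      simpa using this
    have h2 := (ENNReal.continuous_rpow_const (y := 1 - q⁻¹)).tendsto 0 |>.comp h1
    have h3 := ENNReal.Tendsto.mul_const (b := ((C ^ ((G.maxDegree : ℝ)⁻¹)) ^ (edgeCard G)) ^ q⁻¹)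
      h2 (Or.inr hK)
    rw [ENNReal.zero_rpow_of_pos hq2, zero_mul] at h3
    exact tendsto_of_tendsto_of_tendsto_of_le_of_le' tendsto_const_nhds h3
      (Eventually.of_forall fun _ => zero_le) hBle
  have hBreal : Tendsto (fun n => L * (B n).toReal) atTop (nhds 0) := by
    have := ((ENNReal.tendsto_toReal (ENNReal.zero_ne_top)).comp hBlim).const_mul L
    simpa using this
  refine squeeze_zero (fun n => ?_) (fun n => ?_) hBreal
  · exact div_nonneg (Real.iSup_nonneg fun _ => abs_nonneg _) (by positivity)
  · have hBt : (B n).toReal =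
        (∑ i ∈ Finset.univ.filter (fun i : Fin v → Fin n => ¬ Function.Injective i),
          |edgeProd G (fun a b => Q n (i a) (i b))|) / (n : ℝ) ^ v := by
      rw [hB]
      simp only [ENNReal.toReal_div, ENNReal.toReal_pow, ENNReal.toReal_natCast]
      rw [ENNReal.toReal_sum (fun _ _ => ENNReal.ofReal_ne_top)]
      simp
    rw [hBt, ← mul_div_assoc]
    refine div_le_div_of_nonneg_right ?_ (by positivity)
    refine ciSup_le fun x => ?_
    rw [← Finset.sum_filter_add_sum_filter_not Finset.univ
      (fun i : Fin v → Fin n => Function.Injective i)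
      (fun i => φ (x ∘ i) * edgeProd G (fun a b => Q n (i a) (i b))), sub_add_cancel_left, abs_neg,
      Finset.mul_sum]
    refine (Finset.abs_sum_le_sum_abs _ _).trans (Finset.sum_le_sum fun i _ => ?_)
    rw [abs_mul]
    exact mul_le_mul_of_nonneg_right (hφ _) (abs_nonneg _)
end
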